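/- The infimum of Cpe(l,m) over all integers l ≥ 3 and m with |m| ≤ l equals −175/(72π); that is, Cpe(l,m) ≥ −175/(72π) for all such (l,m), and for any sequence of integers (m_l)_{l≥3} with |m_l| ≤ l and lim_{l→∞} m_l/l = √(2/3), the values Cpe(l, m_l) converge to −175/(72π). -/

import Mathlib

/-- The common square term Q(l,m). -/
noncomputable def Qf (l : ℕ) (m : ℤ) : ℝ :=
  (1 / 8) * (((l : ℝ) ^ 2 - (m : ℝ) ^ 2) / ((2 * (l : ℝ) + 1) * (2 * (l : ℝ) - 1)) +
    (((l : ℝ) + 1) ^ 2 - (m : ℝ) ^ 2) / ((2 * (l : ℝ) + 3) * (2 * (l : ℝ) + 1)) - 1 / 5) ^ 2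

/-- The coefficient ϑ(l,m). -/
noncomputable def thf (l : ℕ) (m : ℤ) : ℝ :=
  (1 / 8) * ((((l : ℝ) + 2) ^ 2 - (m : ℝ) ^ 2) * (((l : ℝ) + 1) ^ 2 - (m : ℝ) ^ 2) *
      ((l : ℝ) + 1) * (l : ℝ)) /
    ((2 * (l : ℝ) + 3) ^ 2 * (2 * (l : ℝ) + 5) * (2 * (l : ℝ) + 1) * ((l : ℝ) + 2) * ((l : ℝ) + 3)) +
  (1 / 8) * ((((l : ℝ) - 1) ^ 2 - (m : ℝ) ^ 2) * ((l : ℝ) ^ 2 - (m : ℝ) ^ 2) *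
      ((l : ℝ) + 1) * (l : ℝ)) /
    ((2 * (l : ℝ) - 3) * (2 * (l : ℝ) - 1) ^ 2 * (2 * (l : ℝ) + 1) * ((l : ℝ) - 2) * ((l : ℝ) - 1)) +
  Qf l m

/-- The coefficient ϱ(l,m). -/
noncomputable def rhf (l : ℕ) (m : ℤ) : ℝ :=
  (1 / 8) * ((((l : ℝ) + 2) ^ 2 - (m : ℝ) ^ 2) * (((l : ℝ) + 1) ^ 2 - (m : ℝ) ^ 2)) /
    ((2 * (l : ℝ) + 1) * (2 * (l : ℝ) + 3) ^ 2 * (2 * (l : ℝ) + 5)) +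
  (1 / 8) * ((((l : ℝ) - 1) ^ 2 - (m : ℝ) ^ 2) * ((l : ℝ) ^ 2 - (m : ℝ) ^ 2)) /
    ((2 * (l : ℝ) - 3) * (2 * (l : ℝ) - 1) ^ 2 * (2 * (l : ℝ) + 1)) +
  Qf l m

/-- The coefficient γ(l,m). -/
noncomputable def gaf (l : ℕ) (m : ℤ) : ℝ :=
  (1 / 8) * ((((l : ℝ) + 2) ^ 2 - (m : ℝ) ^ 2) * (((l : ℝ) + 1) ^ 2 - (m : ℝ) ^ 2) *
      ((l : ℝ) + 2) * ((l : ℝ) + 3)) /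
    ((2 * (l : ℝ) + 1) * (2 * (l : ℝ) + 3) ^ 2 * (2 * (l : ℝ) + 5) * ((l : ℝ) + 1) * (l : ℝ)) +
  (1 / 8) * ((((l : ℝ) - 1) ^ 2 - (m : ℝ) ^ 2) * ((l : ℝ) ^ 2 - (m : ℝ) ^ 2) *
      ((l : ℝ) - 2) * ((l : ℝ) - 1)) /
    ((2 * (l : ℝ) - 3) * (2 * (l : ℝ) - 1) ^ 2 * (2 * (l : ℝ) + 1) * ((l : ℝ) + 1) * (l : ℝ)) +
  Qf l m

/-- The sectional curvature C(e⁰₃, e^m_l) of SDiff(𝕊²) (Theorem 5.3 of the paper). -/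
noncomputable def Cpe (l : ℕ) (m : ℤ) : ℝ :=
  -(525 * (m : ℝ) ^ 2 / (32 * Real.pi)) *
    (3 * gaf l m - 2 * (12 / ((l : ℝ) * ((l : ℝ) + 1)) + 1) * rhf l m -
      (12 / ((l : ℝ) * ((l : ℝ) + 1)) - 1) ^ 2 * thf l m)

/-!
The Lie bracket of `e⁰₃` and `e^m_l` has components in degrees `l - 2`, `l` and `l + 2`, and the
bracket `3γ - 2(s+1)ϱ - (s-1)²ϑ` is, up to a constant factor, the sum of their squared coefficients
with Arnold's weights. The terms of degrees `l ± 2` are exchanged by `l ↦ -1 - l` and the term of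
degree `l` is fixed, so `m²` times this sum is a rational function of `v = 1/(l(l+1))` and
`w = m²/(l(l+1))` alone, namely `w²(1 - w) - v w K(v, w)` with a correction `K` which is
nonnegative for `0 ≤ v ≤ 1/12` and `0 ≤ w`. The curvature is `-525/(32π)` times this function. As
`w²(1 - w) ≤ 4/27`, with equality at `w = 2/3`, it is at least `-175/(72π)`. The correction
disappears in the limit `v → 0`, so the bound is approached as `m/l → √(2/3)`.
-/

open Filter Topology

/-- The coefficient `c_a²` of the recurrence `cos θ · Y_a^m = c_{a+1} Y_{a+1}^m + c_a Y_{a-1}^m`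
for normalized spherical harmonics, with `x = m²`. The degree `a` is a real variable. -/
noncomputable def cosCoeffSq (a x : ℝ) : ℝ :=
  (a ^ 2 - x) / ((2 * a - 1) * (2 * a + 1))

/-- The ratio of the Laplace eigenvalue in degree `b` to the one in degree `a`. -/
noncomputable def eigenvalueRatio (a b : ℝ) : ℝ :=
  b * (b + 1) / (a * (a + 1))

/-- The weight with which a component of the Lie bracket of two eigenfields enters Arnold's
curvature formula: `r` and `s` are the Laplace eigenvalues of that component and of the first
field, both divided by the eigenvalue of the second field. -/
noncomputable def arnoldWeight (s r : ℝ) : ℝ :=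
  3 * r - 2 * (s + 1) - (s - 1) ^ 2 / r

/-- With `v = 1/(l(l+1))`, the factors of the common denominator of the curvature that come from
the degrees `l ± 2` only; the remaining factor of that denominator is `(4 - 3v)²`. -/
noncomputable def neighborDenom (v : ℝ) : ℝ :=
  (4 - 15 * v) * (1 - 2 * v) * (1 - 6 * v)

/-- The numerator of the contribution of the degrees `l ± 2` to `curvatureCorrection`. -/
noncomputable def neighborNum (v w : ℝ) : ℝ :=
  -44 + 793 * v - 2778 * v ^ 2 + 3006 * v ^ 3 - 540 * v ^ 4 +
    (104 - 1446 * v - 1710 * v ^ 2 + 432 * v ^ 3 - 1620 * v ^ 4) * w +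
    (68 - 1143 * v + 13275 * v ^ 2 - 5832 * v ^ 3 + 1620 * v ^ 4) * w ^ 2

/-- The deviation of the normalized curvature from its limit `w²(1 - w)` for `l → ∞`, divided by
`-v w`, where `v = 1/(l(l+1))` and `w = m²/(l(l+1))`. The first term comes from the component of
degree `l` of the Lie bracket, the second one from the components of degrees `l ± 2`. -/
noncomputable def curvatureCorrection (v w : ℝ) : ℝ :=
  72 / 25 * ((3 - v - 5 * w) / (4 - 3 * v)) ^ 2 +
    neighborNum v w / ((4 - 3 * v) ^ 2 * neighborDenom v)

theorem cosCoeffSq_add_one (a x : ℝ) :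
    cosCoeffSq (a + 1) x = ((a + 1) ^ 2 - x) / ((2 * a + 1) * (2 * a + 3)) := by
  rw [cosCoeffSq]
  ring_nf

theorem cosCoeffSq_add_two (a x : ℝ) :
    cosCoeffSq (a + 2) x = ((a + 2) ^ 2 - x) / ((2 * a + 3) * (2 * a + 5)) := by
  rw [cosCoeffSq]
  ring_nf

theorem cosCoeffSq_sub_one (a x : ℝ) :
    cosCoeffSq (a - 1) x = ((a - 1) ^ 2 - x) / ((2 * a - 3) * (2 * a - 1)) := by
  rw [cosCoeffSq]
  ring_nf

theorem eigenvalueRatio_add_two (a : ℝ) :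
    eigenvalueRatio a (a + 2) = (a + 2) * (a + 3) / (a * (a + 1)) := by
  rw [eigenvalueRatio]
  ring_nf

theorem eigenvalueRatio_sub_two (a : ℝ) :
    eigenvalueRatio a (a - 2) = (a - 2) * (a - 1) / (a * (a + 1)) := by
  rw [eigenvalueRatio]
  ring_nf

theorem curvature_bracket_eq_arnoldWeight {l : ℕ} (hl : 2 < l) (m : ℤ) (s : ℝ) :
    3 * gaf l m - 2 * (s + 1) * rhf l m - (s - 1) ^ 2 * thf l m =
      1 / 8 *
        (cosCoeffSq (l + 1) (m ^ 2) * cosCoeffSq (l + 2) (m ^ 2) *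
            arnoldWeight s (eigenvalueRatio l (l + 2)) +
          cosCoeffSq l (m ^ 2) * cosCoeffSq (l - 1) (m ^ 2) *
            arnoldWeight s (eigenvalueRatio l (l - 2)) +
          (cosCoeffSq l (m ^ 2) + cosCoeffSq (l + 1) (m ^ 2) - 1 / 5) ^ 2 *
            arnoldWeight s 1) := by
  have hl' : (2 : ℝ) < l := by exact_mod_cast hl
  have hl₁ : (l : ℝ) - 1 ≠ 0 := by linarith
  have hl₂ : (l : ℝ) - 2 ≠ 0 := by linarith
  rw [cosCoeffSq_add_one, cosCoeffSq_add_two, cosCoeffSq_sub_one, eigenvalueRatio_add_two,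
    eigenvalueRatio_sub_two]
  unfold gaf rhf thf Qf cosCoeffSq arnoldWeight
  field_simp
  ring

section ReciprocalEigenvalue

variable {a x v w : ℝ}

theorem four_sub_three_mul_eq (ha : 0 < a) (hv : v = 1 / (a * (a + 1))) :
    4 - 3 * v = (2 * a - 1) * (2 * a + 3) / (a * (a + 1)) := by
  rw [hv]
  field_simp
  ring

theorem neighborDenom_eq (ha : 0 < a) (hv : v = 1 / (a * (a + 1))) :
    neighborDenom v =
      (2 * a - 3) * (2 * a + 5) * ((a - 1) * (a + 2)) * ((a - 2) * (a + 3)) /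
        (a * (a + 1)) ^ 3 := by
  rw [neighborDenom, hv]
  field_simp
  ring

theorem neighbor_terms_eq (ha : 2 < a) (hv : v = 1 / (a * (a + 1))) (hw : w = x / (a * (a + 1))) :
    x / 8 *
        (cosCoeffSq (a + 1) x * cosCoeffSq (a + 2) x *
            arnoldWeight (12 * v) (eigenvalueRatio a (a + 2)) +
          cosCoeffSq a x * cosCoeffSq (a - 1) x *
            arnoldWeight (12 * v) (eigenvalueRatio a (a - 2))) =
      w ^ 2 * (1 - w) - v * w * (neighborNum v w / ((4 - 3 * v) ^ 2 * neighborDenom v)) := by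
  have ha₁ : a - 1 ≠ 0 := by linarith
  have ha₂ : a - 2 ≠ 0 := by linarith
  -- `field_simp` normalizes `2 * a` to `a * 2` before it looks for these hypotheses.
  have ha₃ : a * 2 - 1 ≠ 0 := by linarith
  have ha₄ : a * 2 - 3 ≠ 0 := by linarith
  rw [cosCoeffSq_add_one, cosCoeffSq_add_two, cosCoeffSq_sub_one, eigenvalueRatio_add_two,
    eigenvalueRatio_sub_two, four_sub_three_mul_eq (by linarith) hv,
    neighborDenom_eq (by linarith) hv, hv, hw]
  unfold cosCoeffSq arnoldWeight neighborNum
  field_simp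
  ring

theorem cosCoeffSq_add_cosCoeffSq_sub_one_fifth (ha : 1 / 2 < a) (hv : v = 1 / (a * (a + 1)))
    (hw : w = x / (a * (a + 1))) :
    cosCoeffSq a x + cosCoeffSq (a + 1) x - 1 / 5 = 2 / 5 * ((3 - v - 5 * w) / (4 - 3 * v)) := by
  have ha' : a * 2 - 1 ≠ 0 := by linarith
  rw [four_sub_three_mul_eq (by linarith) hv, cosCoeffSq_add_one, cosCoeffSq, hv, hw]
  field_simp
  ring

theorem arnoldWeight_one (s : ℝ) : arnoldWeight s 1 = -s ^ 2 := by
  rw [arnoldWeight]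
  ring

theorem same_degree_term_eq (ha : 1 / 2 < a) (hv : v = 1 / (a * (a + 1)))
    (hw : w = x / (a * (a + 1))) :
    x / 8 * ((cosCoeffSq a x + cosCoeffSq (a + 1) x - 1 / 5) ^ 2 * arnoldWeight (12 * v) 1) =
      -(v * w * (72 / 25 * ((3 - v - 5 * w) / (4 - 3 * v)) ^ 2)) := by
  have hwv : w = x * v := by rw [hv, hw, mul_one_div]
  rw [cosCoeffSq_add_cosCoeffSq_sub_one_fifth ha hv hw, arnoldWeight_one]
  linear_combination 72 / 25 * v * ((3 - v - 5 * w) / (4 - 3 * v)) ^ 2 * hwv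

end ReciprocalEigenvalue

theorem Cpe_eq_curvatureCorrection {l : ℕ} (hl : 2 < l) (m : ℤ) {v w : ℝ}
    (hv : v = 1 / (l * (l + 1))) (hw : w = m ^ 2 / (l * (l + 1))) :
    Cpe l m =
      -(525 / (32 * Real.pi)) * (w ^ 2 * (1 - w) - v * w * curvatureCorrection v w) := by
  have hl' : (2 : ℝ) < l := by exact_mod_cast hl
  have hs : 12 / ((l : ℝ) * (l + 1)) = 12 * v := by rw [hv, mul_one_div]
  rw [Cpe, hs, curvature_bracket_eq_arnoldWeight hl, curvatureCorrection]
  linear_combination -(525 / (32 * Real.pi)) *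
    (neighbor_terms_eq hl' hv hw + same_degree_term_eq (by linarith) hv hw)

theorem neighborDenom_pos {v : ℝ} (hv : v ≤ 1 / 12) : 0 < neighborDenom v := by
  have h₁ : 0 < 4 - 15 * v := by linarith
  have h₂ : 0 < 1 - 2 * v := by linarith
  have h₃ : 0 < 1 - 6 * v := by linarith
  rw [neighborDenom]
  positivity

theorem correction_numerator_nonneg {v w : ℝ} (hv₀ : 0 ≤ v) (hv : v ≤ 1 / 12) (hw : 0 ≤ w) :
    0 ≤ 72 * (3 - v - 5 * w) ^ 2 * neighborDenom v + 25 * neighborNum v w := by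
  have hv₂ : v ^ 2 ≤ v / 12 := by nlinarith
  have hv₃ : v ^ 3 ≤ v ^ 2 / 12 := by nlinarith [sq_nonneg v]
  have hv₄ : v ^ 4 ≤ v ^ 3 / 12 := by nlinarith [pow_nonneg hv₀ 3]
  have hv₆ : v ^ 6 ≤ v ^ 5 / 12 := by nlinarith [pow_nonneg hv₀ 5]
  have square_coeff : 0 ≤ 356 - 4527 * v + 25371 * v ^ 2 - 18792 * v ^ 3 + 1620 * v ^ 4 := by
    nlinarith [sq_nonneg (v - 1 / 11), pow_nonneg hv₀ 4]
  have linear_coeff :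
      0 ≤ 12 - 129 * v - 754 * v ^ 2 + 10065 * v ^ 3 - 7794 * v ^ 4 + 540 * v ^ 5 := by
    have tangent : 0 ≤ (v - 1 / 12) ^ 2 * (v + 1 / 6) := by positivity
    linarith [pow_nonneg hv₀ 5]
  have constant_coeff :
      0 ≤ 68 + 1477 * v + 9642 * v ^ 2 - 305991 * v ^ 3 + 67041 * v ^ 4 + 136728 * v ^ 5 -
        14580 * v ^ 6 := by
    linarith [pow_nonneg hv₀ 4, pow_nonneg hv₀ 5]
  -- The center `(2 + 3v)/5` is chosen so that the linear and constant remainders are nonnegative.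
  calc 0 ≤ (356 - 4527 * v + 25371 * v ^ 2 - 18792 * v ^ 3 + 1620 * v ^ 4) *
            (5 * w - (2 + 3 * v)) ^ 2 +
          90 * (12 - 129 * v - 754 * v ^ 2 + 10065 * v ^ 3 - 7794 * v ^ 4 + 540 * v ^ 5) * w +
          (68 + 1477 * v + 9642 * v ^ 2 - 305991 * v ^ 3 + 67041 * v ^ 4 + 136728 * v ^ 5 -
            14580 * v ^ 6) := by positivity
    _ = 72 * (3 - v - 5 * w) ^ 2 * neighborDenom v + 25 * neighborNum v w := by
      rw [neighborDenom, neighborNum]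
      ring

theorem curvatureCorrection_nonneg {v w : ℝ} (hv₀ : 0 ≤ v) (hv : v ≤ 1 / 12) (hw : 0 ≤ w) :
    0 ≤ curvatureCorrection v w := by
  have h₁ : 0 < 4 - 3 * v := by linarith
  have h₂ : 0 < neighborDenom v := neighborDenom_pos hv
  have h₃ := correction_numerator_nonneg hv₀ hv hw
  calc 0 ≤ (72 * (3 - v - 5 * w) ^ 2 * neighborDenom v + 25 * neighborNum v w) /
          (25 * ((4 - 3 * v) ^ 2 * neighborDenom v)) := by positivity
    _ = curvatureCorrection v w := by
      rw [curvatureCorrection]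
      field_simp

theorem continuousAt_curvatureCorrection (w : ℝ) :
    ContinuousAt (fun p : ℝ × ℝ => curvatureCorrection p.1 p.2) (0, w) := by
  unfold curvatureCorrection neighborNum neighborDenom
  fun_prop (disch := norm_num)

theorem sq_mul_one_sub_le {w : ℝ} (hw : 0 ≤ w) : w ^ 2 * (1 - w) ≤ 4 / 27 := by
  have h : 0 ≤ (w - 2 / 3) ^ 2 * (w + 1 / 3) := by positivity
  linarith

theorem neg_le_Cpe {l : ℕ} (hl : 3 ≤ l) (m : ℤ) : -(175 / (72 * Real.pi)) ≤ Cpe l m := by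
  have hl' : (3 : ℝ) ≤ l := by exact_mod_cast hl
  obtain ⟨v, hv⟩ : ∃ v : ℝ, v = 1 / (l * (l + 1)) := ⟨_, rfl⟩
  obtain ⟨w, hw⟩ : ∃ w : ℝ, w = m ^ 2 / (l * (l + 1)) := ⟨_, rfl⟩
  have hv₀ : 0 ≤ v := by rw [hv]; positivity
  have hw₀ : 0 ≤ w := by rw [hw]; positivity
  have hv₁ : v ≤ 1 / 12 := by
    rw [hv]
    exact one_div_le_one_div_of_le (by norm_num) (by nlinarith)
  have correction : 0 ≤ v * w * curvatureCorrection v w :=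
    mul_nonneg (mul_nonneg hv₀ hw₀) (curvatureCorrection_nonneg hv₀ hv₁ hw₀)
  calc -(175 / (72 * Real.pi)) = -(525 / (32 * Real.pi)) * (4 / 27) := by ring
    _ ≤ -(525 / (32 * Real.pi)) * (w ^ 2 * (1 - w) - v * w * curvatureCorrection v w) :=
      mul_le_mul_of_nonpos_left (by linarith [sq_mul_one_sub_le hw₀])
        (neg_nonpos.mpr (by positivity))
    _ = Cpe l m := (Cpe_eq_curvatureCorrection hl m hv hw).symm

theorem tendsto_one_div_mul_add_one :
    Tendsto (fun l : ℕ => 1 / ((l : ℝ) * (l + 1))) atTop (𝓝 0) := by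
  simpa only [one_div_mul_one_div, mul_zero] using
    (tendsto_one_div_atTop_nhds_zero_nat (𝕜 := ℝ)).mul tendsto_one_div_add_atTop_nhds_zero_nat

theorem tendsto_sq_div_mul_add_one {u : ℕ → ℝ} {c : ℝ}
    (hu : Tendsto (fun l : ℕ => u l / l) atTop (𝓝 c)) :
    Tendsto (fun l : ℕ => u l ^ 2 / ((l : ℝ) * (l + 1))) atTop (𝓝 (c ^ 2)) := by
  have h := (hu.pow 2).mul (tendsto_natCast_div_add_atTop (1 : ℝ))
  rw [mul_one] at h
  refine h.congr fun l => ?_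
  rcases eq_or_ne (l : ℝ) 0 with hl | hl
  · simp [hl]
  · field_simp

theorem tendsto_Cpe {m : ℕ → ℤ} {c : ℝ}
    (hm : Tendsto (fun l : ℕ => (m l : ℝ) / l) atTop (𝓝 c)) :
    Tendsto (fun l : ℕ => Cpe l (m l)) atTop
      (𝓝 (-(525 / (32 * Real.pi)) * ((c ^ 2) ^ 2 * (1 - c ^ 2)))) := by
  have hv := tendsto_one_div_mul_add_one
  have hw := tendsto_sq_div_mul_add_one hm
  have correction :=
    (hv.mul hw).mul ((continuousAt_curvatureCorrection (c ^ 2)).tendsto.comp (hv.prodMk_nhds hw))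
  have profile := (hw.pow 2).mul (hw.const_sub 1)
  have limit := (profile.sub correction).const_mul (-(525 / (32 * Real.pi)))
  rw [zero_mul, zero_mul, sub_zero] at limit
  refine limit.congr' ?_
  filter_upwards [eventually_gt_atTop 2] with l hl
  exact (Cpe_eq_curvatureCorrection hl (m l) rfl rfl).symm

theorem infimum_sectional_curvature_rp2_general :
    (∀ l : ℕ, 3 ≤ l → ∀ m : ℤ, -(175 / (72 * Real.pi)) ≤ Cpe l m) ∧
    (∀ (m : ℕ → ℤ) (c : ℝ), Tendsto (fun l : ℕ => (m l : ℝ) / (l : ℝ)) atTop (𝓝 c) →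
      Tendsto (fun l : ℕ => Cpe l (m l)) atTop
        (𝓝 (-(525 / (32 * Real.pi)) * ((c ^ 2) ^ 2 * (1 - c ^ 2))))) :=
  ⟨fun _ hl m => neg_le_Cpe hl m, fun _ _ hm => tendsto_Cpe hm⟩

theorem infimum_sectional_curvature_rp2 :
    (∀ l : ℕ, 3 ≤ l → ∀ m : ℤ, |m| ≤ (l : ℤ) →
      -(175 / (72 * Real.pi)) ≤ Cpe l m) ∧
    (∀ m : ℕ → ℤ, (∀ l : ℕ, 3 ≤ l → |m l| ≤ (l : ℤ)) →
      Filter.Tendsto (fun l : ℕ => (m l : ℝ) / (l : ℝ)) Filter.atTop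
        (nhds (Real.sqrt (2 / 3))) →
      Filter.Tendsto (fun l : ℕ => Cpe l (m l)) Filter.atTop
        (nhds (-(175 / (72 * Real.pi))))) := by
  refine ⟨fun l hl m _ => infimum_sectional_curvature_rp2_general.1 l hl m, fun m _ hm => ?_⟩
  convert infimum_sectional_curvature_rp2_general.2 m _ hm using 2
  rw [Real.sq_sqrt (by norm_num)]
  ring
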